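/- Let K = ⋃_{ℓ=1}^L [a_ℓ, b_ℓ] ⊆ [−1,1] with −1 = a_1 < b_1 < a_2 < ⋯ < a_L < b_L = 1, let w be continuous and strictly positive on K, and let N ≥ 1. For each d ≥ N let V_d be any monic polynomial of degree N minimizing sslash · sslash_d among monic polynomials of degree N. Then: (i) the sequence (V_d)_{d≥N} has a subsequence converging (coefficientwise, equivalently in any norm on the space of polynomials of degree ≤ N) to a monic polynomial of degree N that minimizes ‖P/w‖_{L1(K)} among monic polynomials of degree N; and (ii) if the minimizer U of ‖P/w‖_{L1(K)} among monic polynomials of degree N is unique, then the whole sequence (V_d)_{d≥N} converges to U. -/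

import Mathlib

open MeasureTheory Filter Polynomial

/-- The `(d+1) × (d+1)` symmetric Toeplitz matrix built from a vector `y ∈ ℝ^{d+1}`,
with entries `y_{|i−j|}`. -/
noncomputable def toepFin (d : ℕ) (y : Fin (d + 1) → ℝ) :
    Matrix (Fin (d + 1)) (Fin (d + 1)) ℝ :=
  fun i j => y ⟨(((i : ℕ) : ℤ) - ((j : ℕ) : ℤ)).natAbs, by omega⟩

/-- The transplantation `P_ℓ(x) = P(((bℓ−aℓ)x + aℓ + bℓ)/2)` of a polynomial
from `[aℓ, bℓ]` to `[-1, 1]`. -/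
noncomputable def transplant (aℓ bℓ : ℝ) (P : Polynomial ℝ) : Polynomial ℝ :=
  P.comp (Polynomial.C ((bℓ - aℓ) / 2) * Polynomial.X + Polynomial.C ((aℓ + bℓ) / 2))

/-- The entries `J^ℓ_{k,n} = ∫_0^π cos(kθ) sin((n+1)θ) / w_ℓ(cos θ) dθ`, where
`w_ℓ(x) = w(((bℓ−aℓ)x + aℓ + bℓ)/2)` is the transplantation of the weight `w`. -/
noncomputable def Jent (aℓ bℓ : ℝ) (w : ℝ → ℝ) (k n : ℕ) : ℝ :=
  ∫ θ in (0:ℝ)..Real.pi,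
    Real.cos (k * θ) * Real.sin ((n + 1) * θ) /
      w (((bℓ - aℓ) * Real.cos θ + aℓ + bℓ) / 2)

/-- The weighted `L1` norm `‖P/w‖_{L1(K)} = ∑_ℓ ∫_{a_ℓ}^{b_ℓ} |P(t)|/w(t) dt`
on `K = ⋃_{ℓ<L} [a ℓ, b ℓ]`. -/
noncomputable def L1K (L : ℕ) (a b : ℕ → ℝ) (w : ℝ → ℝ) (P : Polynomial ℝ) : ℝ :=
  ∑ ℓ ∈ Finset.range L, ∫ t in (a ℓ)..(b ℓ), |P.eval t| / w t

/-- The ersatz norm `⫽P⫽_d`: the infimum of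
`∑_ℓ ((b_ℓ−a_ℓ)/2)(y^{ℓ,+}_0 + y^{ℓ,−}_0)` over vectors `y^{ℓ,±} ∈ ℝ^{d+1}` with
`y^{ℓ,+} − y^{ℓ,−} = J^{ℓ,d} W^ℓ p` and `Toep_d(y^{ℓ,±}) ⪰ 0`, where `q ℓ = W^ℓ p` is
the vector of second-kind Chebyshev coefficients of the transplantation `P_ℓ`. -/
noncomputable def ersatz (L N d : ℕ) (a b : ℕ → ℝ) (w : ℝ → ℝ) (P : Polynomial ℝ) : ℝ :=
  sInf { s : ℝ |
    ∃ q : ℕ → Fin (N + 1) → ℝ,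
      (∀ ℓ < L, transplant (a ℓ) (b ℓ) P
          = ∑ n : Fin (N + 1), Polynomial.C (q ℓ n) * Polynomial.Chebyshev.U ℝ ((n : ℕ) : ℤ)) ∧
      ∃ yp ym : ℕ → Fin (d + 1) → ℝ,
        (∀ ℓ < L, ∀ k : Fin (d + 1),
            yp ℓ k - ym ℓ k
              = ∑ n : Fin (N + 1), Jent (a ℓ) (b ℓ) w (k : ℕ) (n : ℕ) * q ℓ n) ∧
        (∀ ℓ < L, (toepFin d (yp ℓ)).PosSemidef ∧ (toepFin d (ym ℓ)).PosSemidef) ∧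
        s = ∑ ℓ ∈ Finset.range L, ((b ℓ - a ℓ) / 2) * (yp ℓ 0 + ym ℓ 0) }

/-! ### Trigonometric moments and Toeplitz matrices -/

/-- Cosine moments on `[0, π]`. -/
noncomputable def mom (f : ℝ → ℝ) (k : ℕ) : ℝ := ∫ θ in (0:ℝ)..Real.pi, Real.cos (k * θ) * f θ

lemma cos_natAbs (i j : ℕ) (θ : ℝ) :
    Real.cos (((((i : ℕ) : ℤ) - ((j : ℕ) : ℤ)).natAbs : ℝ) * θ)
      = Real.cos (i * θ) * Real.cos (j * θ) + Real.sin (i * θ) * Real.sin (j * θ) := by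
  rw [← Real.cos_sub, Nat.cast_natAbs, Int.cast_abs]
  push_cast
  rcases abs_choice ((i : ℝ) - j) with h | h <;> rw [h]
  · congr 1; ring
  · rw [← Real.cos_neg]; congr 1; ring

lemma mom_psd (d : ℕ) (f : ℝ → ℝ) (hf : Continuous f) (hf0 : ∀ θ ∈ Set.Icc 0 Real.pi, 0 ≤ f θ) :
    (toepFin d (fun k => mom f (k : ℕ))).PosSemidef := by
  apply Matrix.PosSemidef.of_dotProduct_mulVec_nonneg
  · ext i j
    simp only [Matrix.conjTranspose_apply, star_trivial, toepFin]
    congr 1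
    omega
  · intro x
    have : star x ⬝ᵥ (toepFin d (fun k => mom f (k : ℕ))).mulVec x
        = ∫ θ in (0:ℝ)..Real.pi, ((∑ i : Fin (d+1), x i * Real.cos ((i : ℕ) * θ)) ^ 2
            + (∑ i : Fin (d+1), x i * Real.sin ((i : ℕ) * θ)) ^ 2) * f θ := by
      have e : ∀ θ : ℝ, ((∑ i : Fin (d+1), x i * Real.cos ((i : ℕ) * θ)) ^ 2
            + (∑ i : Fin (d+1), x i * Real.sin ((i : ℕ) * θ)) ^ 2) * f θ
            = ∑ i : Fin (d+1), ∑ j : Fin (d+1), x i * (x j *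
              (Real.cos (((((i : ℕ) : ℤ) - ((j : ℕ) : ℤ)).natAbs : ℝ) * θ) * f θ)) := by
        intro θ
        rw [pow_two, pow_two, Finset.sum_mul_sum, Finset.sum_mul_sum, ← Finset.sum_add_distrib,
          Finset.sum_mul]
        refine Finset.sum_congr rfl fun i _ => ?_
        rw [← Finset.sum_add_distrib, Finset.sum_mul]
        refine Finset.sum_congr rfl fun j _ => ?_
        rw [cos_natAbs]
        ring
      simp_rw [e]
      rw [intervalIntegral.integral_finsetSum]
      · simp only [dotProduct, Matrix.mulVec, star_trivial, Finset.mul_sum]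
        refine Finset.sum_congr rfl fun i _ => ?_
        rw [intervalIntegral.integral_finsetSum]
        · refine Finset.sum_congr rfl fun j _ => ?_
          rw [intervalIntegral.integral_const_mul, intervalIntegral.integral_const_mul]
          simp only [toepFin, mom]
          ring
        · intro j _
          exact Continuous.intervalIntegrable (by fun_prop) _ _
      · intro j _
        exact Continuous.intervalIntegrable (by fun_prop) _ _
    rw [this]
    apply intervalIntegral.integral_nonneg Real.pi_pos.le
    intro θ hθ
    have := hf0 θ hθ
    positivity

/-- Fejér sum. -/
noncomputable def fej (d : ℕ) (y : ℕ → ℝ) (θ : ℝ) : ℝ :=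
  (d + 1) * y 0 + 2 * ∑ k ∈ Finset.range d, ((d:ℝ) - k) * (y (k+1) * Real.cos ((k+1 : ℕ) * θ))

lemma fej_eq (d : ℕ) (z : ℕ → ℝ) :
    ∑ i ∈ Finset.range (d+1), ∑ j ∈ Finset.range (d+1), z ((i : ℤ) - (j : ℤ)).natAbs
      = (d + 1) * z 0 + 2 * ∑ k ∈ Finset.range d, ((d:ℝ) - k) * z (k+1) := by
  induction d with
  | zero => simp
  | succ d ih =>
    rw [Finset.sum_range_succ]
    simp_rw [Finset.sum_range_succ _ (d+1)]
    rw [Finset.sum_add_distrib, ih]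
    have h1 : ∑ i ∈ Finset.range (d+1), z ((i : ℤ) - ((d+1 : ℕ) : ℤ)).natAbs
        = ∑ k ∈ Finset.range (d+1), z (k+1) := by
      rw [← Finset.sum_range_reflect]
      refine Finset.sum_congr rfl fun i hi => ?_
      have := Finset.mem_range.1 hi
      congr 1
      omega
    have h2 : ∑ i ∈ Finset.range (d+1), z (((d+1 : ℕ) : ℤ) - (i : ℤ)).natAbs
        = ∑ k ∈ Finset.range (d+1), z (k+1) := by
      rw [← h1]
      refine Finset.sum_congr rfl fun i hi => ?_
      congr 1
      omega
    rw [h1, h2]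
    have h3 : ∑ k ∈ Finset.range (d+1), (((d+1 : ℕ):ℝ) - k) * z (k+1)
        = ∑ k ∈ Finset.range d, ((d:ℝ) - k) * z (k+1) + ∑ k ∈ Finset.range (d+1), z (k+1) := by
      have : ∑ k ∈ Finset.range d, ((d:ℝ) - k) * z (k+1)
        = ∑ k ∈ Finset.range (d+1), ((d:ℝ) - k) * z (k+1) := by
        rw [Finset.sum_range_succ]; simp
      rw [this, ← Finset.sum_add_distrib]
      refine Finset.sum_congr rfl fun i hi => ?_
      push_cast; ring
    rw [h3]
    simp only [sub_self, Int.natAbs_zero]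
    push_cast
    ring

lemma fej_nonneg (d : ℕ) (y : ℕ → ℝ) (hy : (toepFin d (fun k => y (k : ℕ))).PosSemidef) (θ : ℝ) :
    0 ≤ fej d y θ := by
  have hc := hy.dotProduct_mulVec_nonneg (fun i => Real.cos ((i : ℕ) * θ))
  have hs := hy.dotProduct_mulVec_nonneg (fun i => Real.sin ((i : ℕ) * θ))
  have : fej d y θ = ∑ i ∈ Finset.range (d+1), ∑ j ∈ Finset.range (d+1),
      (y ((i : ℤ) - (j : ℤ)).natAbs * Real.cos ((((i : ℤ) - (j : ℤ)).natAbs : ℝ) * θ)) := by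
    rw [fej_eq d (fun k => y k * Real.cos (k * θ))]
    simp [fej]
  rw [this, Finset.sum_range]
  simp_rw [Finset.sum_range]
  refine (add_nonneg hc hs).trans_eq ?_
  simp only [dotProduct, Matrix.mulVec, star_trivial, Finset.mul_sum, ← Finset.sum_add_distrib, Pi.star_apply]
  refine Finset.sum_congr rfl fun i _ => Finset.sum_congr rfl fun j _ => ?_
  rw [cos_natAbs]
  simp only [toepFin]
  ring

lemma integral_cos_int (n : ℤ) (hn : n ≠ 0) :
    ∫ θ in (0:ℝ)..Real.pi, Real.cos (n * θ) = 0 := by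
  rw [intervalIntegral.integral_comp_mul_left (fun x => Real.cos x) (by exact_mod_cast hn)]
  simp [Real.sin_int_mul_pi]

lemma integral_cos_cos (j k : ℕ) :
    ∫ θ in (0:ℝ)..Real.pi, Real.cos (j * θ) * Real.cos (k * θ)
      = if j = k then (if j = 0 then Real.pi else Real.pi / 2) else 0 := by
  have e : ∀ θ : ℝ, Real.cos (j * θ) * Real.cos (k * θ)
      = (1/2) * (Real.cos (((j:ℤ) - (k:ℤ) : ℤ) * θ) + Real.cos (((j:ℤ) + (k:ℤ) : ℤ) * θ)) := by
    intro θ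
    push_cast
    rw [sub_mul, add_mul, Real.cos_sub, Real.cos_add]; ring
  simp_rw [e]
  rw [intervalIntegral.integral_const_mul, intervalIntegral.integral_add
    (Continuous.intervalIntegrable (by fun_prop) _ _)
    (Continuous.intervalIntegrable (by fun_prop) _ _)]
  by_cases h : j = k
  · subst h
    by_cases h0 : j = 0
    · subst h0; simp; ring
    · rw [integral_cos_int ((j:ℤ) + j) (by omega)]
      simp [h0]; ring
  · rw [integral_cos_int ((j:ℤ) + k) (by omega), integral_cos_int ((j:ℤ) - k) (by omega)]
    simp [h]

/-- cosine polynomial -/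
noncomputable def cpoly (m : ℕ) (c : ℕ → ℝ) (θ : ℝ) : ℝ :=
  ∑ k ∈ Finset.range (m+1), c k * Real.cos (k * θ)

lemma cpoly_cont (m : ℕ) (c : ℕ → ℝ) : Continuous (cpoly m c) := by
  unfold cpoly; fun_prop

lemma fej_cont (m : ℕ) (c : ℕ → ℝ) : Continuous (fej m c) := by
  unfold fej; fun_prop

lemma mom_cpoly (m : ℕ) (c : ℕ → ℝ) (j : ℕ) :
    mom (cpoly m c) j = if j ≤ m then c j * (if j = 0 then Real.pi else Real.pi / 2) else 0 := by
  unfold mom cpoly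
  simp_rw [Finset.mul_sum]
  rw [intervalIntegral.integral_finsetSum (fun i _ => Continuous.intervalIntegrable (by fun_prop) _ _)]
  have : ∀ k : ℕ, ∫ θ in (0:ℝ)..Real.pi, Real.cos (j * θ) * (c k * Real.cos (k * θ))
      = if j = k then c j * (if j = 0 then Real.pi else Real.pi / 2) else 0 := by
    intro k
    rw [show (fun θ : ℝ => Real.cos (j * θ) * (c k * Real.cos (k * θ)))
      = fun θ => c k * (Real.cos (j * θ) * Real.cos (k * θ)) by ext; ring,
      intervalIntegral.integral_const_mul, integral_cos_cos]
    by_cases h : j = k <;> simp [h]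
  simp_rw [this]
  simp

lemma fej_mom (d m : ℕ) (hmd : m ≤ d) (c : ℕ → ℝ) (θ : ℝ) :
    fej d (mom (cpoly m c)) θ
      = Real.pi * (d+1) * cpoly m c θ - Real.pi * cpoly m (fun k => c k * k) θ := by
  have h1 : ∑ k ∈ Finset.range d, ((d:ℝ) - k) * (mom (cpoly m c) (k+1) * Real.cos ((k+1 : ℕ) * θ))
      = ∑ k ∈ Finset.range m, ((d:ℝ) - k) * (mom (cpoly m c) (k+1) * Real.cos ((k+1 : ℕ) * θ)) := by
    symm
    apply Finset.sum_subset (Finset.range_subset_range.2 hmd)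
    intro k _ hk
    rw [mom_cpoly, if_neg (by simpa using hk)]
    simp
  unfold fej
  rw [h1]
  unfold cpoly
  rw [Finset.sum_range_succ', Finset.sum_range_succ']
  change _ * mom (cpoly m c) 0 + 2 * ∑ k ∈ Finset.range m, ((d:ℝ) - k) * (mom (cpoly m c) (k+1) * Real.cos ((k+1 : ℕ) * θ)) = _
  simp_rw [mom_cpoly]
  have : ∑ k ∈ Finset.range m, ((d:ℝ) - k) * ((if k + 1 ≤ m then c (k+1) * (if k + 1 = 0 then Real.pi else Real.pi / 2) else 0) * Real.cos ((k+1 : ℕ) * θ))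
     = Real.pi/2 * ((d+1) * ∑ k ∈ Finset.range m, c (k+1) * Real.cos ((k+1 : ℕ) * θ) -
        ∑ k ∈ Finset.range m, c (k+1) * (k+1 : ℕ) * Real.cos ((k+1 : ℕ) * θ)) := by
    rw [Finset.mul_sum, ← Finset.sum_sub_distrib, Finset.mul_sum]
    refine Finset.sum_congr rfl fun k hk => ?_
    rw [if_pos (by simpa using hk), if_neg (by omega)]
    push_cast
    ring
  rw [this]
  simp
  ring

lemma integral_fej (d : ℕ) (y : ℕ → ℝ) :
    ∫ θ in (0:ℝ)..Real.pi, fej d y θ = Real.pi * (d+1) * y 0 := by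
  unfold fej
  rw [intervalIntegral.integral_add (Continuous.intervalIntegrable (by fun_prop) _ _)
    (Continuous.intervalIntegrable (by fun_prop) _ _), intervalIntegral.integral_const_mul,
    intervalIntegral.integral_const_mul,
    intervalIntegral.integral_finsetSum (fun i _ => Continuous.intervalIntegrable (by fun_prop) _ _)]
  rw [Finset.sum_eq_zero]
  · simp; ring
  · intro k _
    rw [intervalIntegral.integral_const_mul, intervalIntegral.integral_const_mul]
    have := integral_cos_int ((k+1 : ℕ) : ℤ) (by omega)
    rw [Int.cast_natCast] at this
    rw [this]; simp

lemma mom_add (f g : ℝ → ℝ) (hf : Continuous f) (hg : Continuous g) (k : ℕ) :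
    mom (fun θ => f θ + g θ) k = mom f k + mom g k := by
  unfold mom
  rw [← intervalIntegral.integral_add (Continuous.intervalIntegrable (by fun_prop) _ _)
    (Continuous.intervalIntegrable (by fun_prop) _ _)]
  simp_rw [mul_add]

lemma mom_sub (f g : ℝ → ℝ) (hf : Continuous f) (hg : Continuous g) (k : ℕ) :
    mom (fun θ => f θ - g θ) k = mom f k - mom g k := by
  unfold mom
  rw [← intervalIntegral.integral_sub (Continuous.intervalIntegrable (by fun_prop) _ _)
    (Continuous.intervalIntegrable (by fun_prop) _ _)]
  simp_rw [mul_sub]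

lemma fej_sub (d : ℕ) (y z : ℕ → ℝ) (θ : ℝ) :
    fej d (fun k => y k - z k) θ = fej d y θ - fej d z θ := by
  unfold fej
  have : ∑ k ∈ Finset.range d, ((d:ℝ) - k) * ((y (k+1) - z (k+1)) * Real.cos ((k+1 : ℕ) * θ))
    = ∑ k ∈ Finset.range d, ((d:ℝ) - k) * (y (k+1) * Real.cos ((k+1 : ℕ) * θ))
     - ∑ k ∈ Finset.range d, ((d:ℝ) - k) * (z (k+1) * Real.cos ((k+1 : ℕ) * θ)) := by
    rw [← Finset.sum_sub_distrib]
    exact Finset.sum_congr rfl fun k hk => by ring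
  rw [this]; ring

lemma fej_congr (d : ℕ) (y z : ℕ → ℝ) (h : ∀ k ≤ d, y k = z k) (θ : ℝ) :
    fej d y θ = fej d z θ := by
  unfold fej
  rw [h 0 (by omega)]
  congr 2
  refine Finset.sum_congr rfl fun k hk => ?_
  rw [h (k+1) (by simpa using hk)]

/-- Key inequality for cosine polynomials. -/
lemma key_cpoly (d m : ℕ) (hmd : m ≤ d) (c : ℕ → ℝ) (yp ym : ℕ → ℝ)
    (hp : (toepFin d (fun k => yp (k : ℕ))).PosSemidef)
    (hm : (toepFin d (fun k => ym (k : ℕ))).PosSemidef)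
    (h : ∀ k ≤ d, yp k - ym k = mom (cpoly m c) k) :
    (d + 1) * ∫ θ in (0:ℝ)..Real.pi, |cpoly m c θ| ≤ (d+1) * (yp 0 + ym 0)
      + ∫ θ in (0:ℝ)..Real.pi, |cpoly m (fun k => c k * k) θ| := by
  have c1 := cpoly_cont m c
  have c2 := cpoly_cont m (fun k => c k * k)
  have hb : ∀ θ, Real.pi * (d+1) * |cpoly m c θ|
      ≤ (fej d yp θ + fej d ym θ) + Real.pi * |cpoly m (fun k => c k * k) θ| := by
    intro θ
    have e1 := fej_mom d m hmd c θ
    rw [← fej_congr d _ _ h, fej_sub] at e1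
    have e2 : Real.pi * (d+1) * |cpoly m c θ| = |Real.pi * (d+1) * cpoly m c θ| := by
      rw [abs_mul, abs_of_nonneg (by positivity : 0 ≤ Real.pi * ((d:ℝ)+1))]
    have e3 : Real.pi * |cpoly m (fun k => c k * k) θ| = |Real.pi * cpoly m (fun k => c k * k) θ| := by
      rw [abs_mul, abs_of_nonneg Real.pi_pos.le]
    rw [e2, e3]
    have n1 := fej_nonneg d yp hp θ
    have n2 := fej_nonneg d ym hm θ
    rw [show Real.pi * (d+1) * cpoly m c θ = fej d yp θ - fej d ym θ + Real.pi * cpoly m (fun k => c k * k) θ by linarith]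
    refine (abs_add_le _ _).trans ?_
    gcongr
    rw [abs_le]; constructor <;> linarith
  have c3 := fej_cont d yp
  have c4 := fej_cont d ym
  have := intervalIntegral.integral_mono_on (μ := volume) Real.pi_pos.le
    (Continuous.intervalIntegrable (by fun_prop) _ _)
    (Continuous.intervalIntegrable (by fun_prop) _ _) (fun θ _ => hb θ)
  rw [intervalIntegral.integral_const_mul, intervalIntegral.integral_add
    (Continuous.intervalIntegrable (by fun_prop) _ _)
    (Continuous.intervalIntegrable (by fun_prop) _ _), intervalIntegral.integral_add
    (Continuous.intervalIntegrable (by fun_prop) _ _)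
    (Continuous.intervalIntegrable (by fun_prop) _ _), integral_fej, integral_fej,
    intervalIntegral.integral_const_mul] at this
  have hpi := Real.pi_pos
  refine le_of_mul_le_mul_left ?_ hpi
  linarith

lemma toep_add (d : ℕ) (y z : Fin (d+1) → ℝ) :
    toepFin d (fun k => y k + z k) = toepFin d y + toepFin d z := rfl

lemma abs_split (x : ℝ) : |x| = max x 0 + max (-x) 0 := by
  rcases le_total 0 x with h | h
  · rw [abs_of_nonneg h, max_eq_left h, max_eq_right (by linarith)]; ring
  · rw [abs_of_nonpos h, max_eq_right h, max_eq_left (by linarith)]; ring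

lemma self_split (x : ℝ) : x = max x 0 - max (-x) 0 := by
  rcases le_total 0 x with h | h
  · rw [max_eq_left h, max_eq_right (by linarith)]; ring
  · rw [max_eq_right h, max_eq_left (by linarith)]; ring

lemma mom_zero_eq (f : ℝ → ℝ) : mom f 0 = ∫ θ in (0:ℝ)..Real.pi, f θ := by
  simp [mom]

/-- Existence of a feasible pair. -/
lemma feasible (d : ℕ) (f : ℝ → ℝ) (hf : Continuous f) :
    ∃ zp zm : ℕ → ℝ, (toepFin d (fun k => zp (k : ℕ))).PosSemidef ∧
      (toepFin d (fun k => zm (k : ℕ))).PosSemidef ∧ (∀ k, zp k - zm k = mom f k) ∧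
      zp 0 + zm 0 = ∫ θ in (0:ℝ)..Real.pi, |f θ| := by
  refine ⟨mom (fun θ => max (f θ) 0), mom (fun θ => max (-f θ) 0),
    mom_psd d _ (by fun_prop) (fun _ _ => le_max_right _ _),
    mom_psd d _ (by fun_prop) (fun _ _ => le_max_right _ _), ?_, ?_⟩
  · intro k
    rw [← mom_sub _ _ (by fun_prop) (by fun_prop)]
    congr 1; ext θ; exact (self_split _).symm
  · rw [← mom_add _ _ (by fun_prop) (by fun_prop), mom_zero_eq]
    congr 1; ext θ; exact (abs_split _).symm

/-- Key inequality for continuous functions. -/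
lemma key_cont (d m : ℕ) (hmd : m ≤ d) (c : ℕ → ℝ) (f : ℝ → ℝ) (hf : Continuous f)
    (yp ym : Fin (d+1) → ℝ)
    (hp : (toepFin d yp).PosSemidef)
    (hm : (toepFin d ym).PosSemidef)
    (h : ∀ k : Fin (d+1), yp k - ym k = mom f (k:ℕ)) :
    ∫ θ in (0:ℝ)..Real.pi, |f θ| ≤ (yp 0 + ym 0)
      + 2 * (∫ θ in (0:ℝ)..Real.pi, |cpoly m c θ - f θ|)
      + (∫ θ in (0:ℝ)..Real.pi, |cpoly m (fun k => c k * k) θ|) / (d + 1) := by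
  have c1 := cpoly_cont m c
  obtain ⟨zp, zm, zp1, zm1, z2, z3⟩ := feasible d (fun θ => cpoly m c θ - f θ) (by fun_prop)
  let Yp : ℕ → ℝ := fun k => (if h : k < d+1 then yp ⟨k, h⟩ else 0) + zp k
  let Ym : ℕ → ℝ := fun k => (if h : k < d+1 then ym ⟨k, h⟩ else 0) + zm k
  have hYp : (toepFin d (fun k => Yp (k : ℕ))) = toepFin d yp + toepFin d (fun k => zp (k : ℕ)) := by
    rw [← toep_add]; congr 1; ext k; simp only [Yp, dif_pos k.2]
  have hYm : (toepFin d (fun k => Ym (k : ℕ))) = toepFin d ym + toepFin d (fun k => zm (k : ℕ)) := by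
    rw [← toep_add]; congr 1; ext k; simp only [Ym, dif_pos k.2]
  have key := key_cpoly d m hmd c Yp Ym (hYp ▸ hp.add zp1) (hYm ▸ hm.add zm1) (by
    intro k hk
    have e1 := h ⟨k, by omega⟩
    have e2 := z2 k
    rw [mom_sub _ _ c1 hf] at e2
    simp only [Yp, Ym, dif_pos (Nat.lt_succ_of_le hk)]
    simp only at e1
    linarith)
  have e0 : Yp 0 + Ym 0 = yp 0 + ym 0 + ∫ θ in (0:ℝ)..Real.pi, |cpoly m c θ - f θ| := by
    rw [← z3]; simp [Yp, Ym]; ring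
  rw [e0] at key
  have tri : ∫ θ in (0:ℝ)..Real.pi, |f θ| ≤ (∫ θ in (0:ℝ)..Real.pi, |cpoly m c θ|)
      + ∫ θ in (0:ℝ)..Real.pi, |cpoly m c θ - f θ| := by
    rw [← intervalIntegral.integral_add (Continuous.intervalIntegrable (by fun_prop) _ _)
    (Continuous.intervalIntegrable (by fun_prop) _ _)]
    apply intervalIntegral.integral_mono_on (μ := volume) Real.pi_pos.le
      (Continuous.intervalIntegrable (by fun_prop) _ _)
      (Continuous.intervalIntegrable (by fun_prop) _ _)
    intro θ _
    have := abs_sub (cpoly m c θ) (cpoly m c θ - f θ)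
    simpa using this
  have hd : (0:ℝ) < d + 1 := by positivity
  have key2 : ∫ θ in (0:ℝ)..Real.pi, |cpoly m c θ| ≤ (yp 0 + ym 0 + ∫ θ in (0:ℝ)..Real.pi, |cpoly m c θ - f θ|)
      + (∫ θ in (0:ℝ)..Real.pi, |cpoly m (fun k => c k * k) θ|) / (d + 1) := by
    rw [← mul_le_mul_iff_right₀ hd]
    refine key.trans_eq ?_
    field_simp
  linarith

/-! ### Polynomials on one interval -/

noncomputable def tt (a b θ : ℝ) : ℝ := ((b - a) * Real.cos θ + a + b) / 2

noncomputable def ff (a b : ℝ) (w : ℝ → ℝ) (P : Polynomial ℝ) (θ : ℝ) : ℝ :=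
  P.eval (tt a b θ) * (Real.sin θ / w (tt a b θ))

lemma tt_cont (a b : ℝ) : Continuous (tt a b) := by unfold tt; fun_prop

lemma tt_mem {a b : ℝ} (hab : a < b) (θ : ℝ) : tt a b θ ∈ Set.Icc a b := by
  have h1 := Real.cos_le_one θ
  have h2 := Real.neg_one_le_cos θ
  unfold tt
  constructor <;> nlinarith

lemma wt_cont {a b : ℝ} (hab : a < b) {w : ℝ → ℝ} (hw : ContinuousOn w (Set.Icc a b))
    (hwp : ∀ x ∈ Set.Icc a b, 0 < w x) : Continuous (fun θ => Real.sin θ / w (tt a b θ)) := by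
  have : Continuous (fun θ => w (tt a b θ)) := hw.comp_continuous (tt_cont a b) (tt_mem hab)
  exact Real.continuous_sin.div this (fun θ => (hwp _ (tt_mem hab θ)).ne')

lemma ff_cont {a b : ℝ} (hab : a < b) {w : ℝ → ℝ} (hw : ContinuousOn w (Set.Icc a b))
    (hwp : ∀ x ∈ Set.Icc a b, 0 < w x) (P : Polynomial ℝ) : Continuous (ff a b w P) :=
  (P.continuous.comp (tt_cont a b)).mul (wt_cont hab hw hwp)

lemma eval_transplant (a b : ℝ) (P : Polynomial ℝ) (θ : ℝ) :
    (transplant a b P).eval (Real.cos θ) = P.eval (tt a b θ) := by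
  unfold transplant tt
  rw [Polynomial.eval_comp]
  congr 1
  simp; ring

lemma moment_eq {a b : ℝ} (hab : a < b) {w : ℝ → ℝ} (hw : ContinuousOn w (Set.Icc a b))
    (hwp : ∀ x ∈ Set.Icc a b, 0 < w x) (N : ℕ) (P : Polynomial ℝ) (q : Fin (N+1) → ℝ)
    (hq : transplant a b P
          = ∑ n : Fin (N + 1), Polynomial.C (q n) * Polynomial.Chebyshev.U ℝ ((n : ℕ) : ℤ)) (k : ℕ) :
    ∑ n : Fin (N + 1), Jent a b w k (n : ℕ) * q n = mom (ff a b w P) k := by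
  have hwc : Continuous (fun θ => w (tt a b θ)) := hw.comp_continuous (tt_cont a b) (tt_mem hab)
  have hw0 : ∀ θ, w (tt a b θ) ≠ 0 := fun θ => (hwp _ (tt_mem hab θ)).ne'
  have e : ∀ θ : ℝ, Real.cos (k * θ) * ff a b w P θ
      = ∑ n : Fin (N+1), Real.cos (k * θ) * Real.sin (((n:ℕ) + 1) * θ) / w (tt a b θ) * q n := by
    intro θ
    unfold ff
    rw [← eval_transplant, hq, Polynomial.eval_finsetSum, Finset.sum_mul, Finset.mul_sum]
    refine Finset.sum_congr rfl fun n _ => ?_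
    have := Polynomial.Chebyshev.U_real_cos θ ((n : ℕ) : ℤ)
    rw [Int.cast_natCast] at this
    rw [← this]
    simp only [Polynomial.eval_mul, Polynomial.eval_C]
    ring
  unfold mom
  simp_rw [e]
  rw [intervalIntegral.integral_finsetSum]
  · refine Finset.sum_congr rfl fun n _ => ?_
    rw [intervalIntegral.integral_mul_const]
    rfl
  · intro n _
    refine Continuous.intervalIntegrable ?_ _ _
    exact (Continuous.div (by fun_prop) hwc hw0).mul continuous_const

lemma integral_eq {a b : ℝ} (hab : a < b) {w : ℝ → ℝ} (hw : ContinuousOn w (Set.Icc a b))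
    (hwp : ∀ x ∈ Set.Icc a b, 0 < w x) (P : Polynomial ℝ) :
    ∫ t in a..b, |P.eval t| / w t = (b - a) / 2 * ∫ θ in (0:ℝ)..Real.pi, |ff a b w P θ| := by
  have key := intervalIntegral.integral_comp_mul_deriv'' (a := 0) (b := Real.pi) (f := tt a b)
    (f' := fun θ => (b - a) * (-Real.sin θ) / 2) (g := fun t => |P.eval t| / w t)
    (tt_cont a b).continuousOn
    (by
      intro x _
      apply HasDerivAt.hasDerivWithinAt
      unfold tt
      simpa using ((((Real.hasDerivAt_cos x).const_mul (b - a)).add_const a).add_const b).div_const 2)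
    (by fun_prop)
    (by
      have : ContinuousOn (fun t => |P.eval t| / w t) (Set.Icc a b) :=
        (P.continuous.abs.continuousOn).div hw (fun x hx => (hwp x hx).ne')
      refine this.mono ?_
      rintro _ ⟨θ, _, rfl⟩
      exact tt_mem hab θ)
  have e0 : tt a b 0 = b := by simp [tt]
  have e1 : tt a b Real.pi = a := by simp [tt]; ring
  rw [e0, e1, intervalIntegral.integral_symm a b] at key
  have key' := (neg_eq_iff_eq_neg.2 key).symm
  rw [key', ← intervalIntegral.integral_const_mul, ← intervalIntegral.integral_neg]
  apply intervalIntegral.integral_congr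
  intro θ hθ
  rw [Set.uIcc_of_le Real.pi_pos.le] at hθ
  have hs := Real.sin_nonneg_of_mem_Icc hθ
  have hwθ := hwp _ (tt_mem hab θ)
  simp only [Function.comp, ff]
  rw [abs_mul, abs_of_nonneg (div_nonneg hs hwθ.le)]
  ring

/-- The sequence of second-kind Chebyshev polynomials. -/
noncomputable def useq : Polynomial.Sequence ℝ where
  elems' n := Polynomial.Chebyshev.U ℝ ((n : ℕ) : ℤ)
  degree_eq' n := Polynomial.Chebyshev.degree_U_natCast ℝ n

lemma exists_seq_coeffs (S : Polynomial.Sequence ℝ) (N : ℕ) (P : Polynomial ℝ) (hP : P.natDegree ≤ N) :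
    ∃ q : ℕ → ℝ, P = ∑ n ∈ Finset.range (N+1), Polynomial.C (q n) * S n := by
  have hmem : P ∈ Polynomial.degreeLT ℝ (N+1) := by
    rw [Polynomial.mem_degreeLT]
    exact lt_of_le_of_lt (Polynomial.natDegree_le_iff_degree_le.1 hP) (by exact_mod_cast Nat.lt_succ_self N)
  rw [← Polynomial.Sequence.span_degreeLT S (fun i _ => by simp),
    show Set.Iio (N+1) = Finset.range (N+1) by simp,
    Submodule.mem_span_image_finset_iff_exists_fun'] at hmem
  obtain ⟨c, hc⟩ := hmem
  refine ⟨c, ?_⟩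
  rw [← hc]
  exact Finset.sum_congr rfl fun n _ => by rw [Polynomial.smul_eq_C_mul]

lemma exists_q (a b : ℝ) (N : ℕ) (P : Polynomial ℝ) (hP : P.natDegree ≤ N) :
    ∃ q : Fin (N+1) → ℝ, transplant a b P
      = ∑ n : Fin (N + 1), Polynomial.C (q n) * Polynomial.Chebyshev.U ℝ ((n : ℕ) : ℤ) := by
  obtain ⟨q, hq⟩ := exists_seq_coeffs useq N (transplant a b P) (by
    unfold transplant
    refine Polynomial.natDegree_comp_le.trans ?_
    calc _ ≤ P.natDegree * 1 := Nat.mul_le_mul_left _ (Polynomial.natDegree_linear_le)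
      _ ≤ N := by omega)
  refine ⟨fun n => q n, ?_⟩
  rw [hq, Finset.sum_range]
  rfl

lemma approx (f : ℝ → ℝ) (hf : Continuous f) (ε : ℝ) (hε : 0 < ε) :
    ∃ (m0 : ℕ) (c : ℕ → ℝ), ∀ m, m0 ≤ m → ∀ θ ∈ Set.Icc 0 Real.pi, |cpoly m c θ - f θ| ≤ ε := by
  obtain ⟨G, hG⟩ := exists_polynomial_near_of_continuousOn (-1) 1 (fun x => f (Real.arccos x))
    (by have := Real.continuous_arccos; fun_prop) ε hε
  obtain ⟨q, hq⟩ := exists_seq_coeffs (Polynomial.Chebyshev.chebyshevTsequence ℝ) G.natDegree G le_rfl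
  refine ⟨G.natDegree, fun k => if k < G.natDegree + 1 then q k else 0, ?_⟩
  intro m hm θ hθ
  have h1 := hG (Real.cos θ) ⟨Real.neg_one_le_cos θ, Real.cos_le_one θ⟩
  rw [Real.arccos_cos hθ.1 hθ.2] at h1
  refine le_of_eq_of_le ?_ h1.le
  congr 2
  have : G.eval (Real.cos θ) = ∑ n ∈ Finset.range (G.natDegree+1), q n * Real.cos (n * θ) := by
    conv_lhs => rw [hq]
    rw [Polynomial.eval_finsetSum]
    refine Finset.sum_congr rfl fun n _ => ?_
    have := Polynomial.Chebyshev.T_real_cos θ (n : ℤ)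
    rw [Int.cast_natCast] at this
    rw [← this, Polynomial.eval_mul, Polynomial.eval_C]
    rfl
  rw [this]
  unfold cpoly
  symm
  rw [← Finset.sum_subset (Finset.range_subset_range.2 (Nat.succ_le_succ hm))]
  · refine Finset.sum_congr rfl fun n hn => ?_
    simp only [if_pos (Finset.mem_range.1 hn)]
  · intro n _ hn
    have := mt Finset.mem_range.2 hn
    simp only [if_neg this, zero_mul]

lemma ff_sum (a b : ℝ) (w : ℝ → ℝ) (N : ℕ) (P : Polynomial ℝ) (hP : P.natDegree ≤ N) (θ : ℝ) :
    ff a b w P θ = ∑ i ∈ Finset.range (N+1), P.coeff i * ff a b w (Polynomial.X ^ i) θ := by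
  unfold ff
  rw [Polynomial.eval_eq_sum_range' (Nat.lt_succ_of_le hP), Finset.sum_mul]
  refine Finset.sum_congr rfl fun i _ => ?_
  simp [mul_assoc]

lemma cpoly_sum (m N : ℕ) (p : ℕ → ℝ) (c : ℕ → ℕ → ℝ) (θ : ℝ) :
    cpoly m (fun k => ∑ i ∈ Finset.range (N+1), p i * c i k) θ
      = ∑ i ∈ Finset.range (N+1), p i * cpoly m (c i) θ := by
  unfold cpoly
  simp_rw [Finset.mul_sum, Finset.sum_mul]
  rw [Finset.sum_comm]
  exact Finset.sum_congr rfl fun i _ => Finset.sum_congr rfl fun j _ => by ring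

lemma abs_sum_le (N : ℕ) (p g : ℕ → ℝ) (B : ℝ) (h : ∀ i, i < N + 1 → |g i| ≤ B) :
    |∑ i ∈ Finset.range (N+1), p i * g i| ≤ B * ∑ i ∈ Finset.range (N+1), |p i| := by
  refine (Finset.abs_sum_le_sum_abs _ _).trans ?_
  rw [Finset.mul_sum]
  refine Finset.sum_le_sum fun i hi => ?_
  rw [abs_mul, mul_comm]
  exact mul_le_mul_of_nonneg_right (h i (by simpa using hi)) (abs_nonneg _)

lemma integral_le_const (f : ℝ → ℝ) (hf : Continuous f) (B : ℝ)
    (h : ∀ θ ∈ Set.Icc 0 Real.pi, f θ ≤ B) : ∫ θ in (0:ℝ)..Real.pi, f θ ≤ Real.pi * B := by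
  have := intervalIntegral.integral_mono_on (μ := volume) Real.pi_pos.le
    (hf.intervalIntegrable _ _) ((continuous_const (y := B)).intervalIntegrable _ _) h
  simpa using this

lemma uniform_lower {a b : ℝ} (hab : a < b) {w : ℝ → ℝ} (hw : ContinuousOn w (Set.Icc a b))
    (hwp : ∀ x ∈ Set.Icc a b, 0 < w x) (N : ℕ) (ε : ℝ) (hε : 0 < ε) :
    ∃ D : ℕ, ∀ d, D ≤ d → ∀ P : Polynomial ℝ, P.natDegree ≤ N → ∀ yp ym : Fin (d+1) → ℝ,
      (toepFin d yp).PosSemidef → (toepFin d ym).PosSemidef →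
      (∀ k : Fin (d+1), yp k - ym k = mom (ff a b w P) (k:ℕ)) →
      ∫ θ in (0:ℝ)..Real.pi, |ff a b w P θ| ≤ yp 0 + ym 0
        + ε * ∑ i ∈ Finset.range (N+1), |P.coeff i| := by
  have hpi := Real.pi_pos
  choose m0 c hc using fun i : ℕ => approx (ff a b w (Polynomial.X ^ i))
    (ff_cont hab hw hwp _) (ε / (4 * Real.pi)) (by positivity)
  let m := (Finset.range (N+1)).sup m0
  have hm : ∀ i, i < N + 1 → m0 i ≤ m := fun i hi => Finset.le_sup (by simpa using hi)
  let B : ℝ := ∑ i ∈ Finset.range (N+1), ∑ k ∈ Finset.range (m+1), |c i k * k|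
  have hB : ∀ i, i < N+1 → ∀ θ, |cpoly m (fun k => c i k * k) θ| ≤ B := by
    intro i hi θ
    have h1 : |cpoly m (fun k => c i k * k) θ| ≤ ∑ k ∈ Finset.range (m+1), |c i k * k| := by
      unfold cpoly
      refine (Finset.abs_sum_le_sum_abs _ _).trans (Finset.sum_le_sum fun k _ => ?_)
      rw [abs_mul]
      exact mul_le_of_le_one_right (abs_nonneg _) (Real.abs_cos_le_one _)
    refine h1.trans ?_
    exact Finset.single_le_sum (f := fun i => ∑ k ∈ Finset.range (m+1), |c i k * k|)
      (fun i _ => Finset.sum_nonneg fun k _ => abs_nonneg _) (by simpa using hi)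
  obtain ⟨D1, hD1⟩ := exists_nat_gt (2 * Real.pi * B / ε)
  refine ⟨max m D1, ?_⟩
  intro d hd P hP yp ym hyp hym hy
  let S := ∑ i ∈ Finset.range (N+1), |P.coeff i|
  have hS : 0 ≤ S := Finset.sum_nonneg fun _ _ => abs_nonneg _
  let C : ℕ → ℝ := fun k => ∑ i ∈ Finset.range (N+1), P.coeff i * c i k
  have key := key_cont d m ((le_max_left _ _).trans hd) C _ (ff_cont hab hw hwp P) yp ym hyp hym hy
  have c1 := cpoly_cont m C
  have c2 := cpoly_cont m (fun k => C k * k)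
  have c3 := ff_cont hab hw hwp P
  have b1 : ∫ θ in (0:ℝ)..Real.pi, |cpoly m C θ - ff a b w P θ| ≤ Real.pi * (ε / (4 * Real.pi) * S) := by
    apply integral_le_const _ (by fun_prop)
    intro θ hθ
    rw [cpoly_sum, ff_sum a b w N P hP, ← Finset.sum_sub_distrib]
    simp_rw [← mul_sub]
    exact abs_sum_le N _ _ _ (fun i hi => hc i m (hm i hi) θ hθ)
  have b2 : ∫ θ in (0:ℝ)..Real.pi, |cpoly m (fun k => C k * k) θ| ≤ Real.pi * (B * S) := by
    apply integral_le_const _ (by fun_prop)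
    intro θ hθ
    have : (fun k : ℕ => C k * k) = fun k : ℕ => ∑ i ∈ Finset.range (N+1), P.coeff i * (c i k * k) := by
      ext k
      simp only [C, Finset.sum_mul, mul_assoc]
    rw [this, cpoly_sum m N _ (fun i k => c i k * k)]
    exact abs_sum_le N _ _ _ (fun i hi => hB i hi θ)
  have hd1 : (0:ℝ) < d + 1 := by positivity
  have b3 : (∫ θ in (0:ℝ)..Real.pi, |cpoly m (fun k => C k * k) θ|) / (d + 1) ≤ ε / 2 * S := by
    rw [div_le_iff₀ hd1]
    refine b2.trans ?_
    have h1 : 2 * Real.pi * B / ε ≤ d + 1 := by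
      have : (D1 : ℝ) ≤ d := by exact_mod_cast (le_max_right _ _).trans hd
      linarith
    rw [div_le_iff₀ hε] at h1
    nlinarith
  have b4 : Real.pi * (ε / (4 * Real.pi) * S) = ε / 4 * S := by field_simp
  rw [b4] at b1
  change _ ≤ _ + ε * S
  linarith

/-! ### The two norms -/

/-- The ersatz norm is at most the weighted `L1` norm. -/
lemma ersatz_upper (L N d : ℕ) (a b : ℕ → ℝ) (w : ℝ → ℝ) (hab : ∀ ℓ < L, a ℓ < b ℓ)
    (hw : ∀ ℓ < L, ContinuousOn w (Set.Icc (a ℓ) (b ℓ)))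
    (hwp : ∀ ℓ < L, ∀ x ∈ Set.Icc (a ℓ) (b ℓ), 0 < w x)
    (P : Polynomial ℝ) (hP : P.natDegree ≤ N) :
    ersatz L N d a b w P ≤ L1K L a b w P := by
  unfold ersatz
  apply csInf_le
  · refine ⟨0, ?_⟩
    rintro s ⟨q, _, yp, ym, _, hpsd, rfl⟩
    refine Finset.sum_nonneg fun ℓ hℓ => ?_
    have hℓ' := Finset.mem_range.1 hℓ
    have h1 : 0 ≤ yp ℓ 0 := by
      have := (hpsd ℓ hℓ').1.diag_nonneg (i := 0)
      simpa [toepFin] using this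
    have h2 : 0 ≤ ym ℓ 0 := by
      have := (hpsd ℓ hℓ').2.diag_nonneg (i := 0)
      simpa [toepFin] using this
    have h3 := hab ℓ hℓ'
    exact mul_nonneg (by linarith) (by linarith)
  · choose q hq using fun ℓ => exists_q (a ℓ) (b ℓ) N P hP
    have hz : ∀ ℓ, ∃ zp zm : ℕ → ℝ, ℓ < L → ((toepFin d (fun k => zp (k : ℕ))).PosSemidef ∧
      (toepFin d (fun k => zm (k : ℕ))).PosSemidef ∧
      (∀ k, zp k - zm k = mom (ff (a ℓ) (b ℓ) w P) k) ∧
      zp 0 + zm 0 = ∫ θ in (0:ℝ)..Real.pi, |ff (a ℓ) (b ℓ) w P θ|) := by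
      intro ℓ
      by_cases hℓ : ℓ < L
      · obtain ⟨zp, zm, h⟩ := feasible d _ (ff_cont (hab ℓ hℓ) (hw ℓ hℓ) (hwp ℓ hℓ) P)
        exact ⟨zp, zm, fun _ => h⟩
      · exact ⟨0, 0, fun h => absurd h hℓ⟩
    choose zp zm hz using hz
    refine ⟨q, fun ℓ _ => hq ℓ, fun ℓ k => zp ℓ k, fun ℓ k => zm ℓ k, ?_, ?_, ?_⟩
    · intro ℓ hℓ k
      rw [moment_eq (hab ℓ hℓ) (hw ℓ hℓ) (hwp ℓ hℓ) N P _ (hq ℓ)]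
      exact (hz ℓ hℓ).2.2.1 k
    · intro ℓ hℓ
      exact ⟨(hz ℓ hℓ).1, (hz ℓ hℓ).2.1⟩
    · unfold L1K
      refine Finset.sum_congr rfl fun ℓ hℓ => ?_
      have hℓ' := Finset.mem_range.1 hℓ
      rw [integral_eq (hab ℓ hℓ') (hw ℓ hℓ') (hwp ℓ hℓ'), ← (hz ℓ hℓ').2.2.2]
      simp

lemma ersatz_nonempty (L N d : ℕ) (a b : ℕ → ℝ) (w : ℝ → ℝ) (hab : ∀ ℓ < L, a ℓ < b ℓ)
    (hw : ∀ ℓ < L, ContinuousOn w (Set.Icc (a ℓ) (b ℓ)))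
    (hwp : ∀ ℓ < L, ∀ x ∈ Set.Icc (a ℓ) (b ℓ), 0 < w x)
    (P : Polynomial ℝ) (hP : P.natDegree ≤ N) :
    ∃ q : ℕ → Fin (N + 1) → ℝ,
      (∀ ℓ < L, transplant (a ℓ) (b ℓ) P
          = ∑ n : Fin (N + 1), Polynomial.C (q ℓ n) * Polynomial.Chebyshev.U ℝ ((n : ℕ) : ℤ)) ∧
      ∃ yp ym : ℕ → Fin (d + 1) → ℝ,
        (∀ ℓ < L, ∀ k : Fin (d + 1),
            yp ℓ k - ym ℓ k
              = ∑ n : Fin (N + 1), Jent (a ℓ) (b ℓ) w (k : ℕ) (n : ℕ) * q ℓ n) ∧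
        (∀ ℓ < L, (toepFin d (yp ℓ)).PosSemidef ∧ (toepFin d (ym ℓ)).PosSemidef) := by
  choose q hq using fun ℓ => exists_q (a ℓ) (b ℓ) N P hP
  have hz : ∀ ℓ, ∃ zp zm : ℕ → ℝ, ℓ < L → ((toepFin d (fun k => zp (k : ℕ))).PosSemidef ∧
    (toepFin d (fun k => zm (k : ℕ))).PosSemidef ∧
    (∀ k, zp k - zm k = mom (ff (a ℓ) (b ℓ) w P) k) ∧
    zp 0 + zm 0 = ∫ θ in (0:ℝ)..Real.pi, |ff (a ℓ) (b ℓ) w P θ|) := by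
    intro ℓ
    by_cases hℓ : ℓ < L
    · obtain ⟨zp, zm, h⟩ := feasible d _ (ff_cont (hab ℓ hℓ) (hw ℓ hℓ) (hwp ℓ hℓ) P)
      exact ⟨zp, zm, fun _ => h⟩
    · exact ⟨0, 0, fun h => absurd h hℓ⟩
  choose zp zm hz using hz
  refine ⟨q, fun ℓ _ => hq ℓ, fun ℓ k => zp ℓ k, fun ℓ k => zm ℓ k, ?_, ?_⟩
  · intro ℓ hℓ k
    rw [moment_eq (hab ℓ hℓ) (hw ℓ hℓ) (hwp ℓ hℓ) N P _ (hq ℓ)]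
    exact (hz ℓ hℓ).2.2.1 k
  · intro ℓ hℓ
    exact ⟨(hz ℓ hℓ).1, (hz ℓ hℓ).2.1⟩

lemma ersatz_lower (L N : ℕ) (a b : ℕ → ℝ) (w : ℝ → ℝ) (hab : ∀ ℓ < L, a ℓ < b ℓ)
    (hw : ∀ ℓ < L, ContinuousOn w (Set.Icc (a ℓ) (b ℓ)))
    (hwp : ∀ ℓ < L, ∀ x ∈ Set.Icc (a ℓ) (b ℓ), 0 < w x) (ε : ℝ) (hε : 0 < ε) :
    ∃ D : ℕ, ∀ d, D ≤ d → ∀ P : Polynomial ℝ, P.natDegree ≤ N →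
      L1K L a b w P ≤ ersatz L N d a b w P + ε * ∑ i ∈ Finset.range (N+1), |P.coeff i| := by
  let M : ℝ := ∑ ℓ ∈ Finset.range L, (b ℓ - a ℓ) / 2
  have hM : 0 ≤ M := Finset.sum_nonneg fun ℓ hℓ => by
    have := hab ℓ (Finset.mem_range.1 hℓ); linarith
  let η := ε / (M + 1)
  have hη : 0 < η := by positivity
  have hD : ∀ ℓ, ∃ D : ℕ, ℓ < L → ∀ d, D ≤ d → ∀ P : Polynomial ℝ, P.natDegree ≤ N →
      ∀ yp ym : Fin (d+1) → ℝ,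
      (toepFin d yp).PosSemidef → (toepFin d ym).PosSemidef →
      (∀ k : Fin (d+1), yp k - ym k = mom (ff (a ℓ) (b ℓ) w P) (k:ℕ)) →
      ∫ θ in (0:ℝ)..Real.pi, |ff (a ℓ) (b ℓ) w P θ| ≤ yp 0 + ym 0
        + η * ∑ i ∈ Finset.range (N+1), |P.coeff i| := by
    intro ℓ
    by_cases hℓ : ℓ < L
    · obtain ⟨D, h⟩ := uniform_lower (hab ℓ hℓ) (hw ℓ hℓ) (hwp ℓ hℓ) N η hη
      exact ⟨D, fun _ => h⟩
    · exact ⟨0, fun h => absurd h hℓ⟩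
  choose D hD using hD
  refine ⟨(Finset.range L).sup D, fun d hd P hP => ?_⟩
  rw [← sub_le_iff_le_add]
  unfold ersatz
  apply le_csInf
  · obtain ⟨q, h1, yp, ym, h2, h3⟩ := ersatz_nonempty L N d a b w hab hw hwp P hP
    exact ⟨_, q, h1, yp, ym, h2, h3, rfl⟩
  · rintro s ⟨q, h1, yp, ym, h2, h3, rfl⟩
    rw [sub_le_iff_le_add]
    let S := ∑ i ∈ Finset.range (N+1), |P.coeff i|
    have hS : 0 ≤ S := Finset.sum_nonneg fun _ _ => abs_nonneg _
    have : L1K L a b w P ≤ ∑ ℓ ∈ Finset.range L, ((b ℓ - a ℓ) / 2) * (yp ℓ 0 + ym ℓ 0)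
        + M * (η * S) := by
      unfold L1K
      rw [Finset.sum_mul, ← Finset.sum_add_distrib]
      refine Finset.sum_le_sum fun ℓ hℓ => ?_
      have hℓ' := Finset.mem_range.1 hℓ
      rw [integral_eq (hab ℓ hℓ') (hw ℓ hℓ') (hwp ℓ hℓ'), ← mul_add]
      have := hab ℓ hℓ'
      refine mul_le_mul_of_nonneg_left ?_ (by linarith)
      refine hD ℓ hℓ' d ((Finset.le_sup hℓ).trans hd) P hP _ _ (h3 ℓ hℓ').1 (h3 ℓ hℓ').2 ?_
      intro k
      rw [h2 ℓ hℓ' k, moment_eq (hab ℓ hℓ') (hw ℓ hℓ') (hwp ℓ hℓ') N P _ (h1 ℓ hℓ')]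
    refine this.trans ?_
    have h5 : M * η ≤ ε := by
      simp only [η]
      rw [mul_div_assoc', div_le_iff₀ (by positivity)]
      nlinarith
    have := mul_le_mul_of_nonneg_right h5 hS
    change _ ≤ _ + ε * S
    linarith

/-! ### Coordinates -/

noncomputable def pol (N : ℕ) (v : Fin (N+1) → ℝ) : Polynomial ℝ :=
  ∑ i : Fin (N+1), Polynomial.monomial (i : ℕ) (v i)

lemma pol_coeff (N : ℕ) (v : Fin (N+1) → ℝ) (i : Fin (N+1)) : (pol N v).coeff i = v i := by
  simp [pol, Polynomial.finsetSum_coeff, Polynomial.coeff_monomial, Fin.val_inj]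

lemma pol_natDegree (N : ℕ) (v : Fin (N+1) → ℝ) : (pol N v).natDegree ≤ N := by
  unfold pol
  refine Polynomial.natDegree_sum_le_of_forall_le _ _ fun i _ => ?_
  exact (Polynomial.natDegree_monomial_le _).trans (by omega)

lemma pol_vec (N : ℕ) (P : Polynomial ℝ) (hP : P.natDegree ≤ N) :
    pol N (fun i => P.coeff i) = P := by
  ext n
  by_cases hn : n < N + 1
  · exact pol_coeff N _ ⟨n, hn⟩
  · rw [Polynomial.coeff_eq_zero_of_natDegree_lt, Polynomial.coeff_eq_zero_of_natDegree_lt]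
    · omega
    · have := pol_natDegree N (fun i => P.coeff i); omega

lemma pol_monic (N : ℕ) (v : Fin (N+1) → ℝ) (hv : v (Fin.last N) = 1) :
    (pol N v).Monic ∧ (pol N v).natDegree = N := by
  have h1 : (pol N v).coeff N = 1 := by
    rw [← hv]; exact pol_coeff N v (Fin.last N)
  have h2 := Polynomial.monic_of_natDegree_le_of_coeff_eq_one N (pol_natDegree N v) h1
  refine ⟨h2, le_antisymm (pol_natDegree N v) ?_⟩
  exact Polynomial.le_natDegree_of_ne_zero (by rw [h1]; norm_num)

lemma L1K_eq (L : ℕ) (a b : ℕ → ℝ) (w : ℝ → ℝ) (hab : ∀ ℓ < L, a ℓ < b ℓ)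
    (hw : ∀ ℓ < L, ContinuousOn w (Set.Icc (a ℓ) (b ℓ)))
    (hwp : ∀ ℓ < L, ∀ x ∈ Set.Icc (a ℓ) (b ℓ), 0 < w x) (P : Polynomial ℝ) :
    L1K L a b w P = ∑ ℓ ∈ Finset.range L, (b ℓ - a ℓ) / 2 *
      ∫ θ in (0:ℝ)..Real.pi, |ff (a ℓ) (b ℓ) w P θ| := by
  unfold L1K
  refine Finset.sum_congr rfl fun ℓ hℓ => ?_
  have hℓ' := Finset.mem_range.1 hℓ
  rw [integral_eq (hab ℓ hℓ') (hw ℓ hℓ') (hwp ℓ hℓ')]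

lemma nn_cont (L N : ℕ) (a b : ℕ → ℝ) (w : ℝ → ℝ) (hab : ∀ ℓ < L, a ℓ < b ℓ)
    (hw : ∀ ℓ < L, ContinuousOn w (Set.Icc (a ℓ) (b ℓ)))
    (hwp : ∀ ℓ < L, ∀ x ∈ Set.Icc (a ℓ) (b ℓ), 0 < w x) :
    Continuous (fun v : Fin (N+1) → ℝ => L1K L a b w (pol N v)) := by
  simp_rw [L1K_eq L a b w hab hw hwp]
  refine continuous_finsetSum _ fun ℓ hℓ => ?_
  have hℓ' := Finset.mem_range.1 hℓ
  refine continuous_const.mul ?_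
  apply intervalIntegral.continuous_parametric_intervalIntegral_of_continuous'
  have e : (Function.uncurry fun (v : Fin (N+1) → ℝ) (θ : ℝ) => |ff (a ℓ) (b ℓ) w (pol N v) θ|)
      = fun x : (Fin (N+1) → ℝ) × ℝ => |∑ i : Fin (N+1), x.1 i *
        ff (a ℓ) (b ℓ) w (Polynomial.X ^ (i:ℕ)) x.2| := by
    ext ⟨v, θ⟩
    simp only [Function.uncurry]
    rw [ff_sum _ _ _ N _ (pol_natDegree N v), Finset.sum_range]
    simp_rw [pol_coeff]
  rw [e]
  refine Continuous.abs (continuous_finsetSum _ fun i _ => ?_)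
  have := ff_cont (hab ℓ hℓ') (hw ℓ hℓ') (hwp ℓ hℓ') (Polynomial.X ^ (i:ℕ))
  fun_prop

lemma L1K_pos (L : ℕ) (hL : 0 < L) (a b : ℕ → ℝ) (w : ℝ → ℝ) (hab : ∀ ℓ < L, a ℓ < b ℓ)
    (hw : ∀ ℓ < L, ContinuousOn w (Set.Icc (a ℓ) (b ℓ)))
    (hwp : ∀ ℓ < L, ∀ x ∈ Set.Icc (a ℓ) (b ℓ), 0 < w x) (P : Polynomial ℝ) (hP : P ≠ 0) :
    0 < L1K L a b w P := by
  unfold L1K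
  refine Finset.sum_pos' (fun ℓ hℓ => ?_) ⟨0, by simpa using hL, ?_⟩
  · have hℓ' := Finset.mem_range.1 hℓ
    refine intervalIntegral.integral_nonneg (hab ℓ hℓ').le fun x hx => ?_
    exact div_nonneg (abs_nonneg _) (hwp ℓ hℓ' x hx).le
  · have hc : ∃ c ∈ Set.Icc (a 0) (b 0), P.eval c ≠ 0 := by
      by_contra! h
      refine hP (Polynomial.eq_zero_of_infinite_isRoot P ?_)
      exact (Set.Icc_infinite (hab 0 hL)).mono fun x hx => h x hx
    obtain ⟨c, hc, hc0⟩ := hc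
    refine intervalIntegral.integral_pos (hab 0 hL) ?_ ?_ ⟨c, hc, ?_⟩
    · exact (P.continuous.abs.continuousOn).div (hw 0 hL) (fun x hx => (hwp 0 hL x hx).ne')
    · intro x hx
      exact div_nonneg (abs_nonneg _) (hwp 0 hL x (Set.Ioc_subset_Icc_self hx)).le
    · exact div_pos (abs_pos.2 hc0) (hwp 0 hL c hc)

lemma pol_smul (N : ℕ) (t : ℝ) (v : Fin (N+1) → ℝ) : pol N (t • v) = Polynomial.C t * pol N v := by
  simp [pol, Finset.mul_sum, Polynomial.C_mul_monomial]

lemma L1K_smul (L : ℕ) (a b : ℕ → ℝ) (w : ℝ → ℝ) (t : ℝ) (P : Polynomial ℝ) :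
    L1K L a b w (Polynomial.C t * P) = |t| * L1K L a b w P := by
  unfold L1K
  rw [Finset.mul_sum]
  refine Finset.sum_congr rfl fun ℓ hℓ => ?_
  rw [← intervalIntegral.integral_const_mul]
  congr 1; ext x
  rw [Polynomial.eval_mul, Polynomial.eval_C, abs_mul]; ring

lemma coercive (L N : ℕ) (hL : 0 < L) (a b : ℕ → ℝ) (w : ℝ → ℝ) (hab : ∀ ℓ < L, a ℓ < b ℓ)
    (hw : ∀ ℓ < L, ContinuousOn w (Set.Icc (a ℓ) (b ℓ)))
    (hwp : ∀ ℓ < L, ∀ x ∈ Set.Icc (a ℓ) (b ℓ), 0 < w x) :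
    ∃ δ > 0, ∀ v : Fin (N+1) → ℝ, δ * ‖v‖ ≤ L1K L a b w (pol N v) := by
  obtain ⟨u, hu, hmin⟩ := (isCompact_sphere (0 : Fin (N+1) → ℝ) 1).exists_isMinOn
    (NormedSpace.sphere_nonempty.2 zero_le_one) (nn_cont L N a b w hab hw hwp).continuousOn
  refine ⟨L1K L a b w (pol N u), ?_, ?_⟩
  · apply L1K_pos L hL a b w hab hw hwp
    intro h0
    have : u = 0 := by
      ext i; rw [← pol_coeff N u i, h0]; simp
    rw [this] at hu
    simp at hu
  · intro v
    by_cases hv : v = 0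
    · subst hv
      have : pol N 0 = 0 := by simp [pol]
      rw [this]; simp [L1K]
    · have hv' : 0 < ‖v‖ := norm_pos_iff.2 hv
      have h1 : ‖v‖⁻¹ • v ∈ Metric.sphere (0 : Fin (N+1) → ℝ) 1 := by
        rw [mem_sphere_zero_iff_norm, norm_smul, norm_inv, norm_norm, inv_mul_cancel₀ hv'.ne']
      have h2 := hmin h1
      simp only [Set.mem_ofPred_eq] at h2
      rw [pol_smul, L1K_smul, abs_of_nonneg (by positivity), ← div_eq_inv_mul, le_div_iff₀ hv'] at h2
      exact h2

/-! ### Abstract convergence of minimizers -/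

lemma abstract_conv {E : Type*} [NormedAddCommGroup E] [ProperSpace E]
    (nn : E → ℝ) (hnn : Continuous nn) (δ : ℝ) (hδ : 0 < δ) (hco : ∀ v, δ * ‖v‖ ≤ nn v)
    (nd : ℕ → E → ℝ) (hup : ∀ d v, nd d v ≤ nn v)
    (hlow : ∀ ε > 0, ∃ D : ℕ, ∀ d, D ≤ d → ∀ v, nn v ≤ nd d v + ε * ‖v‖)
    (A : Set E) (hA : IsClosed A) (v0 : E) (hv0 : v0 ∈ A) (N : ℕ)
    (x : ℕ → E) (hx : ∀ d, N ≤ d → x d ∈ A ∧ ∀ v ∈ A, nd d (x d) ≤ nd d v)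
    (ψ : ℕ → ℕ) (hψ : Tendsto ψ atTop atTop) :
    ∃ φ : ℕ → ℕ, StrictMono φ ∧ ∃ u ∈ A, (∀ v ∈ A, nn u ≤ nn v) ∧
      Tendsto (fun m => x (ψ (φ m))) atTop (nhds u) := by
  let R := nn v0 / (δ / 2)
  obtain ⟨D0, hD0⟩ := hlow (δ / 2) (by positivity)
  have hR : ∀ d, D0 ≤ d → N ≤ d → ‖x d‖ ≤ R := by
    intro d h1 h2
    have e1 := hD0 d h1 (x d)
    have e2 := hco (x d)
    have e3 := (hx d h2).2 v0 hv0
    have e4 := hup d v0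
    rw [le_div_iff₀ (by positivity)]
    linarith
  have hev : ∀ᶠ m in atTop, x (ψ m) ∈ Metric.closedBall (0:E) R := by
    filter_upwards [hψ.eventually_ge_atTop D0, hψ.eventually_ge_atTop N] with m h1 h2
    rw [mem_closedBall_zero_iff]
    exact hR _ h1 h2
  obtain ⟨u, _, φ, hφ, hu⟩ := tendsto_subseq_of_frequently_bounded Metric.isBounded_closedBall
    hev.frequently
  have hψφ : Tendsto (fun m => ψ (φ m)) atTop atTop := hψ.comp hφ.tendsto_atTop
  have hu' : Tendsto (fun m => x (ψ (φ m))) atTop (nhds u) := hu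
  refine ⟨φ, hφ, u, ?_, ?_, hu'⟩
  · refine hA.mem_of_tendsto hu' ?_
    filter_upwards [hψφ.eventually_ge_atTop N] with m hm using (hx _ hm).1
  · intro v hv
    have hR0 : 0 ≤ R := by
      have := hco v0
      have : 0 ≤ nn v0 := le_trans (by positivity) this
      positivity
    apply le_of_forall_pos_le_add
    intro ε hε
    obtain ⟨D1, hD1⟩ := hlow (ε / (R + 1)) (by positivity)
    refine le_of_tendsto ((hnn.tendsto u).comp hu') ?_
    filter_upwards [hψφ.eventually_ge_atTop N, hψφ.eventually_ge_atTop D0,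
      hψφ.eventually_ge_atTop D1] with m h1 h2 h3
    have e1 := hD1 _ h3 (x (ψ (φ m)))
    have e2 := (hx _ h1).2 v hv
    have e3 := hup (ψ (φ m)) v
    have e4 : ε / (R+1) * ‖x (ψ (φ m))‖ ≤ ε := by
      rw [div_mul_eq_mul_div, div_le_iff₀ (by positivity)]
      have := hR _ h2 h1
      nlinarith
    simp only [Function.comp]
    linarith

/-- Let `V d` be, for each `d ≥ N`, a monic polynomial of degree `N` minimizing `⫽·⫽_d`
among monic polynomials of degree `N`. Then (i) some subsequence of `(V d)` converges
coefficientwise to a monic polynomial of degree `N` minimizing `‖·/w‖_{L1(K)}` among monic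
polynomials of degree `N`; and (ii) if the `L1` minimizer `U` is unique, the whole
sequence `(V d)` converges coefficientwise to `U`. -/
theorem ersatz_minimizers_converge
    (L : ℕ) (hL : 0 < L) (a b : ℕ → ℝ)
    (ha0 : a 0 = -1) (hbL : b (L - 1) = 1)
    (hab : ∀ ℓ < L, a ℓ < b ℓ)
    (hgap : ∀ ℓ, ℓ + 1 < L → b ℓ < a (ℓ + 1))
    (w : ℝ → ℝ)
    (hw : ContinuousOn w (⋃ ℓ ∈ Finset.range L, Set.Icc (a ℓ) (b ℓ)))
    (hwpos : ∀ x ∈ ⋃ ℓ ∈ Finset.range L, Set.Icc (a ℓ) (b ℓ), 0 < w x)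
    (N : ℕ) (hN : 1 ≤ N)
    (V : ℕ → Polynomial ℝ)
    (hV : ∀ d, N ≤ d → (V d).Monic ∧ (V d).natDegree = N ∧
      ∀ Q : Polynomial ℝ, Q.Monic → Q.natDegree = N →
        ersatz L N d a b w (V d) ≤ ersatz L N d a b w Q) :
    (∃ φ : ℕ → ℕ, StrictMono φ ∧ (∀ m, N ≤ φ m) ∧
      ∃ Ustar : Polynomial ℝ, Ustar.Monic ∧ Ustar.natDegree = N ∧
        (∀ Q : Polynomial ℝ, Q.Monic → Q.natDegree = N →
          L1K L a b w Ustar ≤ L1K L a b w Q) ∧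
        ∀ n : ℕ, Tendsto (fun m => (V (φ m)).coeff n) atTop (nhds (Ustar.coeff n))) ∧
    (∀ U : Polynomial ℝ, U.Monic → U.natDegree = N →
      (∀ Q : Polynomial ℝ, Q.Monic → Q.natDegree = N →
        L1K L a b w U ≤ L1K L a b w Q) →
      (∀ Q : Polynomial ℝ, Q.Monic → Q.natDegree = N →
        (∀ R : Polynomial ℝ, R.Monic → R.natDegree = N →
          L1K L a b w Q ≤ L1K L a b w R) → Q = U) →
      ∀ n : ℕ, Tendsto (fun d => (V d).coeff n) atTop (nhds (U.coeff n))) := by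
  have hw' : ∀ ℓ < L, ContinuousOn w (Set.Icc (a ℓ) (b ℓ)) := fun ℓ hℓ => hw.mono
    (Set.subset_biUnion_of_mem (u := fun ℓ => Set.Icc (a ℓ) (b ℓ)) (by simpa using hℓ))
  have hwp' : ∀ ℓ < L, ∀ x ∈ Set.Icc (a ℓ) (b ℓ), 0 < w x := fun ℓ hℓ x hx => hwpos x
    (Set.subset_biUnion_of_mem (u := fun ℓ => Set.Icc (a ℓ) (b ℓ)) (by simpa using hℓ) hx)
  obtain ⟨δ, hδ, hco⟩ := coercive L N hL a b w hab hw' hwp'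
  have hmon : ∀ Q : Polynomial ℝ, Q.Monic → Q.natDegree = N →
      (fun i : Fin (N+1) => Q.coeff i) ∈ {v : Fin (N+1) → ℝ | v (Fin.last N) = 1} := by
    intro Q h1 h2
    simp only [Set.mem_ofPred_eq, Fin.val_last]
    rw [← h2]; exact h1
  have main : ∀ ψ : ℕ → ℕ, Tendsto ψ atTop atTop → ∃ φ : ℕ → ℕ, StrictMono φ ∧
      ∃ Ustar : Polynomial ℝ, Ustar.Monic ∧ Ustar.natDegree = N ∧
        (∀ Q : Polynomial ℝ, Q.Monic → Q.natDegree = N →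
          L1K L a b w Ustar ≤ L1K L a b w Q) ∧
        ∀ n : ℕ, Tendsto (fun m => (V (ψ (φ m))).coeff n) atTop (nhds (Ustar.coeff n)) := by
    intro ψ hψ
    obtain ⟨φ, hφ, u, huA, humin, hu⟩ := abstract_conv
      (fun v : Fin (N+1) → ℝ => L1K L a b w (pol N v)) (nn_cont L N a b w hab hw' hwp') δ hδ hco
      (fun d v => ersatz L N d a b w (pol N v))
      (fun d v => ersatz_upper L N d a b w hab hw' hwp' _ (pol_natDegree N v))
      (by
        intro ε hε
        obtain ⟨D, hD⟩ := ersatz_lower L N a b w hab hw' hwp' (ε / (N + 1)) (by positivity)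
        refine ⟨D, fun d hd v => (hD d hd _ (pol_natDegree N v)).trans ?_⟩
        refine add_le_add_right ?_ _
        have : ∑ i ∈ Finset.range (N+1), |(pol N v).coeff i| ≤ (N + 1) * ‖v‖ := by
          rw [Finset.sum_range]
          refine (Finset.sum_le_card_nsmul _ _ ‖v‖ fun i _ => ?_).trans_eq ?_
          · rw [pol_coeff]; exact norm_le_pi_norm v i
          · simp
        calc ε / (N + 1) * ∑ i ∈ Finset.range (N+1), |(pol N v).coeff i|
            ≤ ε / (N + 1) * ((N + 1) * ‖v‖) := by gcongr
          _ = ε * ‖v‖ := by field_simp)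
      {v | v (Fin.last N) = 1} (isClosed_eq (continuous_apply _) continuous_const)
      (fun _ => 1) rfl N (fun d i => (V d).coeff i)
      (by
        intro d hd
        obtain ⟨h1, h2, h3⟩ := hV d hd
        refine ⟨hmon _ h1 h2, fun v hv => ?_⟩
        have h4 := pol_monic N v hv
        have h5 := h3 _ h4.1 h4.2
        rw [← pol_vec N (V d) h2.le] at h5
        exact h5)
      ψ hψ
    have hum := pol_monic N u huA
    refine ⟨φ, hφ, pol N u, hum.1, hum.2, ?_, ?_⟩
    · intro Q h1 h2
      have := humin _ (hmon Q h1 h2)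
      rwa [pol_vec N Q h2.le] at this
    · intro n
      by_cases hn : n < N + 1
      · have := (tendsto_pi_nhds.1 hu) ⟨n, hn⟩
        rw [← pol_coeff N u] at this
        exact this
      · have e : (pol N u).coeff n = 0 :=
          Polynomial.coeff_eq_zero_of_natDegree_lt (by rw [hum.2]; omega)
        rw [e]
        refine tendsto_const_nhds.congr' ?_
        filter_upwards [(hψ.comp hφ.tendsto_atTop).eventually_ge_atTop N] with m hm
        symm
        refine Polynomial.coeff_eq_zero_of_natDegree_lt ?_
        have := (hV _ hm).2.1
        simp only [Function.comp] at this
        omega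
  constructor
  · obtain ⟨φ, hφ, U, h1, h2, h3, h4⟩ := main (fun m => m + N) (tendsto_add_atTop_nat N)
    exact ⟨fun m => φ m + N, fun i j hij => Nat.add_lt_add_right (hφ hij) N,
      fun m => Nat.le_add_left _ _, U, h1, h2, h3, h4⟩
  · intro U _ _ _ huniq n
    apply tendsto_of_subseq_tendsto
    intro ψ hψ
    obtain ⟨φ, _, U', h1, h2, h3, h4⟩ := main ψ hψ
    have := huniq U' h1 h2 h3
    subst this
    exact ⟨φ, h4 n⟩
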